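/- Let G be a non-abelian group of unitary n×n matrices with rank(AB − BA) ≤ 2 for all A, B ∈ G, and let M be a linear subspace of ℂⁿ. Define G(M) = {T ∈ G : T M ⊆ M}. Then G(M) = G(M^⊥), G(M) is a subgroup of G, and at least one of the restriction groups G(M)|_M or G(M)|_{M^⊥} is abelian. -/

import Mathlib

open Matrix

/-!
Two linear isometries with the same determinant cannot differ by a map of rank one: if `f - g` has
rank at most one, then `f * g⁻¹` has determinant one and is of the form `x ↦ x + φ x • v`, so
`φ v = 0`, hence `v` is fixed, and preservation of `⟪v, x⟫` forces `φ x • v = 0`. Since `f * g` and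
`g * f` have the same determinant, two isometries which do not commute on an invariant subspace
have an additive commutator of rank at least two there. On two disjoint invariant subspaces these
ranks add up, so if all commutators have rank at most three, then any two elements of the
stabilizer commute on one of the subspaces. A group is not the union of two proper subgroups, so
one and the same subspace serves all pairs.
-/

open Module

section Group

variable {H P Q : Type*} [Group H] [Group P] [Group Q]

theorem forall_mem_or_forall_mem_of_forall_mem_or_mem {K L : Subgroup H}
    (h : ∀ x, x ∈ K ∨ x ∈ L) : (∀ x, x ∈ K) ∨ ∀ x, x ∈ L := by
  simpa [SetLike.le_def] using
    (SubgroupClass.subset_union (H := (⊤ : Subgroup H)) (K := K) (L := L)).1 fun x _ ↦ h x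

theorem forall_commute_or_forall_commute_of_forall_commute_or_commute (φ : H →* P) (ψ : H →* Q)
    (h : ∀ a b, Commute (φ a) (φ b) ∨ Commute (ψ a) (ψ b)) :
    (∀ a b, Commute (φ a) (φ b)) ∨ ∀ a b, Commute (ψ a) (ψ b) := by
  have commute_all (b : H) : (∀ a, Commute (φ a) (φ b)) ∨ ∀ a, Commute (ψ a) (ψ b) := by
    simpa only [Subgroup.mem_comap, Subgroup.mem_centralizer_singleton_iff] using!
      forall_mem_or_forall_mem_of_forall_mem_or_mem
        (K := (Subgroup.centralizer {φ b}).comap φ) (L := (Subgroup.centralizer {ψ b}).comap ψ)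
        fun a ↦ by
          simpa only [Subgroup.mem_comap, Subgroup.mem_centralizer_singleton_iff] using! h a b
  refine Or.imp forall_comm.1 forall_comm.1 ?_
  simpa only [Subgroup.mem_comap, Subgroup.mem_centralizer_iff, Set.forall_mem_range] using!
    forall_mem_or_forall_mem_of_forall_mem_or_mem
      (K := (Subgroup.centralizer (Set.range φ)).comap φ)
      (L := (Subgroup.centralizer (Set.range ψ)).comap ψ)
      fun b ↦ by
        simpa only [Subgroup.mem_comap, Subgroup.mem_centralizer_iff, Set.forall_mem_range]
          using! commute_all b

end Group

section LinearMap

variable {K V W : Type*} [DivisionRing K] [AddCommGroup V] [Module K V]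
  [AddCommGroup W] [Module K W]

theorem finrank_map_add_finrank_map_le_finrank_range [FiniteDimensional K W] (f : V →ₗ[K] W)
    {p q : Submodule K V} (h : Disjoint (p.map f) (q.map f)) :
    finrank K (p.map f) + finrank K (q.map f) ≤ finrank K (LinearMap.range f) :=
  calc finrank K (p.map f) + finrank K (q.map f)
      = finrank K ↥(p.map f ⊔ q.map f) := by
        rw [← Submodule.finrank_sup_add_finrank_inf_eq, h.eq_bot, finrank_bot, add_zero]
    _ ≤ finrank K (LinearMap.range f) :=
        Submodule.finrank_mono (sup_le LinearMap.map_le_range LinearMap.map_le_range)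

theorem map_le_iff_map_eq (e : V ≃ₗ[K] V) (p : Submodule K V) [FiniteDimensional K p] :
    p.map e.toLinearMap ≤ p ↔ p.map e.toLinearMap = p :=
  ⟨fun h ↦ Submodule.eq_of_le_of_finrank_eq h (e.finrank_map_eq p), le_of_eq⟩

end LinearMap

section Isometry

variable {𝕜 V : Type*} [RCLike 𝕜] [NormedAddCommGroup V] [InnerProductSpace 𝕜 V]

theorem eq_one_of_det_eq_one_of_finrank_range_sub_id_le_one [FiniteDimensional 𝕜 V]
    {f : V ≃ₗᵢ[𝕜] V} (hdet : LinearEquiv.det f.toLinearEquiv = 1)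
    (hrank : finrank 𝕜 (LinearMap.range (f.toLinearEquiv.toLinearMap - LinearMap.id)) ≤ 1) :
    f = 1 := by
  obtain ⟨φ, v, hf⟩ := LinearEquiv.mem_dilatransvections_iff_finrank.2 hrank
  have f_apply (x : V) : f x = x + φ x • v := LinearMap.congr_fun hf x
  have det_eq : 1 + φ v = 1 := by
    rw [← LinearMap.transvection.det, ← hf, ← LinearEquiv.coe_det, hdet, Units.val_one]
  have map_v : f v = v := by simpa [f_apply] using Or.inl det_eq
  ext x
  have inner_eq : inner 𝕜 v x = inner 𝕜 v x + φ x * inner 𝕜 v v :=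
    calc inner 𝕜 v x = inner 𝕜 (f v) (f x) := (f.inner_map_map v x).symm
      _ = inner 𝕜 v x + φ x * inner 𝕜 v v := by
        rw [map_v, f_apply, inner_add_right, inner_smul_right]
  have φx_or_v : φ x = 0 ∨ v = 0 := by simpa using inner_eq
  simpa [f_apply] using φx_or_v

theorem eq_of_det_eq_of_finrank_range_sub_le_one [FiniteDimensional 𝕜 V] {f g : V ≃ₗᵢ[𝕜] V}
    (hdet : LinearEquiv.det f.toLinearEquiv = LinearEquiv.det g.toLinearEquiv)
    (hrank : finrank 𝕜 (LinearMap.range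
      (f.toLinearEquiv.toLinearMap - g.toLinearEquiv.toLinearMap)) ≤ 1) : f = g := by
  refine mul_inv_eq_one.1 (eq_one_of_det_eq_one_of_finrank_range_sub_id_le_one ?_ ?_)
  · change LinearEquiv.det (f.toLinearEquiv * g.toLinearEquiv⁻¹) = 1
    rw [map_mul, map_inv, hdet, mul_inv_cancel]
  · have sub_eq_comp : f.toLinearEquiv.toLinearMap - g.toLinearEquiv.toLinearMap =
        ((f * g⁻¹).toLinearEquiv.toLinearMap - LinearMap.id) ∘ₗ g.toLinearEquiv.toLinearMap := by
      ext x
      simp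
    rwa [sub_eq_comp, LinearMap.range_comp_of_range_eq_top _ g.toLinearEquiv.range] at hrank

/-- The additive commutator `f g - g f` of two linear isometries, whose rank measures how far they
are from commuting. -/
def isometryCommutator (f g : V ≃ₗᵢ[𝕜] V) : V →ₗ[𝕜] V :=
  (f * g).toLinearEquiv.toLinearMap - (g * f).toLinearEquiv.toLinearMap

theorem commute_of_finrank_range_isometryCommutator_le_one [FiniteDimensional 𝕜 V]
    {f g : V ≃ₗᵢ[𝕜] V}
    (hrank : finrank 𝕜 (LinearMap.range (isometryCommutator f g)) ≤ 1) : Commute f g := by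
  refine eq_of_det_eq_of_finrank_range_sub_le_one ?_ hrank
  change LinearEquiv.det (f.toLinearEquiv * g.toLinearEquiv) =
    LinearEquiv.det (g.toLinearEquiv * f.toLinearEquiv)
  rw [map_mul, map_mul, mul_comm]

/-- The group of linear isometries mapping the subspace `p` onto itself. Equality, rather than
the inclusion `f p ⊆ p`, makes this a group also when `p` has infinite dimension. -/
def isometryStabilizer (p : Submodule 𝕜 V) : Subgroup (V ≃ₗᵢ[𝕜] V) where
  carrier := {f | p.map f.toLinearEquiv.toLinearMap = p}
  one_mem' := p.map_id
  mul_mem' {f g} hf hg := by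
    change p.map (f.toLinearEquiv.toLinearMap ∘ₗ g.toLinearEquiv.toLinearMap) = p
    rw [Submodule.map_comp, hg, hf]
  inv_mem' {f} hf := (Submodule.map_symm_eq_iff f.toLinearEquiv).2 hf

/-- The restriction of the isometries stabilizing `p` to isometries of `p`, as a homomorphism of
groups. -/
def isometryStabilizerRestrict (p : Submodule 𝕜 V) : isometryStabilizer p →* (p ≃ₗᵢ[𝕜] p) where
  toFun f := (f.1.submoduleMap p).trans (LinearIsometryEquiv.ofEq _ _ f.2)
  map_one' := rfl
  map_mul' _ _ := rfl

variable {p q : Submodule 𝕜 V}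

theorem mem_isometryStabilizer_iff_map_le [FiniteDimensional 𝕜 p] {f : V ≃ₗᵢ[𝕜] V} :
    f ∈ isometryStabilizer p ↔ p.map f.toLinearEquiv.toLinearMap ≤ p :=
  (map_le_iff_map_eq f.toLinearEquiv p).symm

theorem isometryStabilizer_orthogonal (p : Submodule 𝕜 V) [p.HasOrthogonalProjection] :
    isometryStabilizer pᗮ = isometryStabilizer p := by
  ext f
  change pᗮ.map f.toLinearEquiv.toLinearMap = pᗮ ↔ p.map f.toLinearEquiv.toLinearMap = p
  rw [Submodule.map_orthogonal_equiv, Submodule.orthogonalComplement_eq_orthogonalComplement]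

theorem map_isometryCommutator_le (f g : isometryStabilizer p) :
    p.map (isometryCommutator f.1 g.1) ≤ p := by
  rintro _ ⟨x, hx, rfl⟩
  exact p.sub_mem ((f * g).2.le ⟨x, hx, rfl⟩) ((g * f).2.le ⟨x, hx, rfl⟩)

theorem commute_isometryStabilizerRestrict_of_finrank_map_le_one [FiniteDimensional 𝕜 p]
    {f g : isometryStabilizer p}
    (hrank : finrank 𝕜 (p.map (isometryCommutator f.1 g.1)) ≤ 1) :
    Commute (isometryStabilizerRestrict p f) (isometryStabilizerRestrict p g) := by
  apply commute_of_finrank_range_isometryCommutator_le_one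
  rw [← Submodule.finrank_map_subtype_eq, ← LinearMap.range_comp]
  rwa [← LinearMap.range_domRestrict] at hrank

variable [FiniteDimensional 𝕜 V]

theorem commute_or_commute_of_finrank_range_isometryCommutator_le_three (hpq : Disjoint p q)
    {f g : V ≃ₗᵢ[𝕜] V} (hfp : f ∈ isometryStabilizer p) (hgp : g ∈ isometryStabilizer p)
    (hfq : f ∈ isometryStabilizer q) (hgq : g ∈ isometryStabilizer q)
    (hrank : finrank 𝕜 (LinearMap.range (isometryCommutator f g)) ≤ 3) :
    Commute (isometryStabilizerRestrict p ⟨f, hfp⟩) (isometryStabilizerRestrict p ⟨g, hgp⟩) ∨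
      Commute (isometryStabilizerRestrict q ⟨f, hfq⟩) (isometryStabilizerRestrict q ⟨g, hgq⟩) := by
  have disjoint_map : Disjoint (p.map (isometryCommutator f g)) (q.map (isometryCommutator f g)) :=
    hpq.mono (map_isometryCommutator_le ⟨f, hfp⟩ ⟨g, hgp⟩)
      (map_isometryCommutator_le ⟨f, hfq⟩ ⟨g, hgq⟩)
  have finrank_add_le := finrank_map_add_finrank_map_le_finrank_range _ disjoint_map
  have finrank_le_one : finrank 𝕜 (p.map (isometryCommutator f g)) ≤ 1 ∨
      finrank 𝕜 (q.map (isometryCommutator f g)) ≤ 1 := by omega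
  exact finrank_le_one.imp commute_isometryStabilizerRestrict_of_finrank_map_le_one
    commute_isometryStabilizerRestrict_of_finrank_map_le_one

theorem forall_commute_or_forall_commute_of_finrank_range_isometryCommutator_le_three
    (hpq : Disjoint p q) {K : Subgroup (V ≃ₗᵢ[𝕜] V)} (hp : K ≤ isometryStabilizer p)
    (hq : K ≤ isometryStabilizer q)
    (hrank : ∀ f ∈ K, ∀ g ∈ K, finrank 𝕜 (LinearMap.range (isometryCommutator f g)) ≤ 3) :
    (∀ f ∈ K, ∀ g ∈ K, ∀ x ∈ p, f (g x) = g (f x)) ∨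
      ∀ f ∈ K, ∀ g ∈ K, ∀ x ∈ q, f (g x) = g (f x) := by
  refine (forall_commute_or_forall_commute_of_forall_commute_or_commute
    ((isometryStabilizerRestrict p).comp (Subgroup.inclusion hp))
    ((isometryStabilizerRestrict q).comp (Subgroup.inclusion hq)) fun f g ↦
      commute_or_commute_of_finrank_range_isometryCommutator_le_three hpq _ _ _ _
        (hrank f f.2 g g.2)).imp ?_ ?_ <;>
  · intro h f hf g hg x hx
    exact congrArg Subtype.val (DFunLike.congr_fun (h ⟨f, hf⟩ ⟨g, hg⟩).eq ⟨x, hx⟩)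

end Isometry

section Matrix

variable (𝕜 ι : Type*) [RCLike 𝕜] [Fintype ι] [DecidableEq ι]

/-- The action of the unitary group on Euclidean space by linear isometries. -/
noncomputable def unitaryGroupToIsometry :
    unitaryGroup ι 𝕜 →* (EuclideanSpace 𝕜 ι ≃ₗᵢ[𝕜] EuclideanSpace 𝕜 ι) :=
  Unitary.linearIsometryEquiv.toMonoidHom.comp
    (Unitary.map (StarMonoidHom.ofClass (toEuclideanCLM (𝕜 := 𝕜) (n := ι)))).toMonoidHom

variable {𝕜 ι}

theorem unitaryGroupToIsometry_apply (T : unitaryGroup ι 𝕜) (x : EuclideanSpace 𝕜 ι) :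
    unitaryGroupToIsometry 𝕜 ι T x = toEuclideanLin T.1 x :=
  rfl

theorem unitaryGroupToIsometry_mem_isometryStabilizer_iff {T : unitaryGroup ι 𝕜}
    {M : Submodule 𝕜 (EuclideanSpace 𝕜 ι)} :
    unitaryGroupToIsometry 𝕜 ι T ∈ isometryStabilizer M ↔ M.map (toEuclideanLin T.1) ≤ M :=
  mem_isometryStabilizer_iff_map_le

theorem finrank_range_isometryCommutator_unitaryGroupToIsometry (A B : unitaryGroup ι 𝕜) :
    finrank 𝕜 (LinearMap.range (isometryCommutator
      (unitaryGroupToIsometry 𝕜 ι A) (unitaryGroupToIsometry 𝕜 ι B))) =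
      (A.1 * B.1 - B.1 * A.1).rank := by
  rw [rank_eq_finrank_range_toLin _ (PiLp.basisFun 2 𝕜 ι) (PiLp.basisFun 2 𝕜 ι),
    ← toLpLin_eq_toLin, isometryCommutator, ← map_mul, ← map_mul, map_sub]
  rfl

end Matrix

theorem stmt9_general {𝕜 ι : Type*} [RCLike 𝕜] [Fintype ι] [DecidableEq ι]
    (G : Subgroup (Matrix.unitaryGroup ι 𝕜))
    (hr : ∀ A ∈ G, ∀ B ∈ G,
      ((A : Matrix ι ι 𝕜) * (B : Matrix ι ι 𝕜)
        - (B : Matrix ι ι 𝕜) * (A : Matrix ι ι 𝕜)).rank ≤ 3)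
    (M : Submodule 𝕜 (EuclideanSpace 𝕜 ι)) :
    (∀ T ∈ G,
      (M.map (Matrix.toEuclideanLin (T : Matrix ι ι 𝕜)) ≤ M ↔
        Mᗮ.map (Matrix.toEuclideanLin (T : Matrix ι ι 𝕜)) ≤ Mᗮ)) ∧
    (∃ H : Subgroup (Matrix.unitaryGroup ι 𝕜),
      (H : Set (Matrix.unitaryGroup ι 𝕜)) =
        {T | T ∈ G ∧ M.map (Matrix.toEuclideanLin (T : Matrix ι ι 𝕜)) ≤ M}) ∧
    ((∀ T₁ ∈ G, ∀ T₂ ∈ G,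
        M.map (Matrix.toEuclideanLin (T₁ : Matrix ι ι 𝕜)) ≤ M →
        M.map (Matrix.toEuclideanLin (T₂ : Matrix ι ι 𝕜)) ≤ M →
        ∀ x ∈ M,
          Matrix.toEuclideanLin (T₁ : Matrix ι ι 𝕜)
              (Matrix.toEuclideanLin (T₂ : Matrix ι ι 𝕜) x) =
            Matrix.toEuclideanLin (T₂ : Matrix ι ι 𝕜)
              (Matrix.toEuclideanLin (T₁ : Matrix ι ι 𝕜) x)) ∨
     (∀ T₁ ∈ G, ∀ T₂ ∈ G,
        M.map (Matrix.toEuclideanLin (T₁ : Matrix ι ι 𝕜)) ≤ M →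
        M.map (Matrix.toEuclideanLin (T₂ : Matrix ι ι 𝕜)) ≤ M →
        ∀ x ∈ Mᗮ,
          Matrix.toEuclideanLin (T₁ : Matrix ι ι 𝕜)
              (Matrix.toEuclideanLin (T₂ : Matrix ι ι 𝕜) x) =
            Matrix.toEuclideanLin (T₂ : Matrix ι ι 𝕜)
              (Matrix.toEuclideanLin (T₁ : Matrix ι ι 𝕜) x))) := by
  have finrank_le : ∀ f ∈ G.map (unitaryGroupToIsometry 𝕜 ι) ⊓ isometryStabilizer M,
      ∀ g ∈ G.map (unitaryGroupToIsometry 𝕜 ι) ⊓ isometryStabilizer M,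
      finrank 𝕜 (LinearMap.range (isometryCommutator f g)) ≤ 3 := by
    rintro _ ⟨⟨A, hA, rfl⟩, -⟩ _ ⟨⟨B, hB, rfl⟩, -⟩
    exact (finrank_range_isometryCommutator_unitaryGroupToIsometry A B).trans_le (hr A hA B hB)
  simp only [← unitaryGroupToIsometry_mem_isometryStabilizer_iff, ← unitaryGroupToIsometry_apply]
  refine ⟨fun T _ ↦ by rw [isometryStabilizer_orthogonal],
    ⟨G ⊓ (isometryStabilizer M).comap (unitaryGroupToIsometry 𝕜 ι), rfl⟩, ?_⟩
  refine (forall_commute_or_forall_commute_of_finrank_range_isometryCommutator_le_three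
    M.orthogonal_disjoint inf_le_right
    (inf_le_right.trans_eq (isometryStabilizer_orthogonal M).symm) finrank_le).imp ?_ ?_ <;>
  exact fun h T₁ hT₁ T₂ hT₂ hM₁ hM₂ ↦ h _ ⟨⟨T₁, hT₁, rfl⟩, hM₁⟩ _ ⟨⟨T₂, hT₂, rfl⟩, hM₂⟩

/-- For a non-abelian unitary group `G` with `rank (AB - BA) ≤ 2` and a subspace `M`,
the stabilizer `G(M)` equals `G(M^⊥)`, is a subgroup, and at least one of the restriction
groups `G(M)|_M`, `G(M)|_{M^⊥}` is abelian. -/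
theorem stmt9 (n : ℕ) (G : Subgroup (Matrix.unitaryGroup (Fin n) ℂ))
    (hna : ∃ A ∈ G, ∃ B ∈ G, A * B ≠ B * A)
    (hr : ∀ A ∈ G, ∀ B ∈ G,
      ((A : Matrix (Fin n) (Fin n) ℂ) * (B : Matrix (Fin n) (Fin n) ℂ)
        - (B : Matrix (Fin n) (Fin n) ℂ) * (A : Matrix (Fin n) (Fin n) ℂ)).rank ≤ 2)
    (M : Submodule ℂ (EuclideanSpace ℂ (Fin n))) :
    (∀ T ∈ G,
      (M.map (Matrix.toEuclideanLin (T : Matrix (Fin n) (Fin n) ℂ)) ≤ M ↔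
        Mᗮ.map (Matrix.toEuclideanLin (T : Matrix (Fin n) (Fin n) ℂ)) ≤ Mᗮ)) ∧
    (∃ H : Subgroup (Matrix.unitaryGroup (Fin n) ℂ),
      (H : Set (Matrix.unitaryGroup (Fin n) ℂ)) =
        {T | T ∈ G ∧ M.map (Matrix.toEuclideanLin (T : Matrix (Fin n) (Fin n) ℂ)) ≤ M}) ∧
    ((∀ T₁ ∈ G, ∀ T₂ ∈ G,
        M.map (Matrix.toEuclideanLin (T₁ : Matrix (Fin n) (Fin n) ℂ)) ≤ M →
        M.map (Matrix.toEuclideanLin (T₂ : Matrix (Fin n) (Fin n) ℂ)) ≤ M →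
        ∀ x ∈ M,
          Matrix.toEuclideanLin (T₁ : Matrix (Fin n) (Fin n) ℂ)
              (Matrix.toEuclideanLin (T₂ : Matrix (Fin n) (Fin n) ℂ) x) =
            Matrix.toEuclideanLin (T₂ : Matrix (Fin n) (Fin n) ℂ)
              (Matrix.toEuclideanLin (T₁ : Matrix (Fin n) (Fin n) ℂ) x)) ∨
     (∀ T₁ ∈ G, ∀ T₂ ∈ G,
        M.map (Matrix.toEuclideanLin (T₁ : Matrix (Fin n) (Fin n) ℂ)) ≤ M →
        M.map (Matrix.toEuclideanLin (T₂ : Matrix (Fin n) (Fin n) ℂ)) ≤ M →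
        ∀ x ∈ Mᗮ,
          Matrix.toEuclideanLin (T₁ : Matrix (Fin n) (Fin n) ℂ)
              (Matrix.toEuclideanLin (T₂ : Matrix (Fin n) (Fin n) ℂ) x) =
            Matrix.toEuclideanLin (T₂ : Matrix (Fin n) (Fin n) ℂ)
              (Matrix.toEuclideanLin (T₁ : Matrix (Fin n) (Fin n) ℂ) x))) :=
  stmt9_general G (fun A hA B hB ↦ (hr A hA B hB).trans (by norm_num)) M
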